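/- (Longstaff) Let L be a subspace lattice on a complex separable Hilbert space H and let x, f be nonzero vectors in H. Then the rank one operator x⊗f* belongs to Alg L if and only if there is a subspace E ∈ L such that x ∈ E and f ∈ E₋^⊥. -/

import Mathlib

open scoped InnerProductSpace

noncomputable section

/-- The join (closed linear span) of a family of subspaces of a Hilbert space. -/
def closedJoin {H : Type*} [NormedAddCommGroup H] [InnerProductSpace ℂ H]
    (S : Set (Submodule ℂ H)) : Submodule ℂ H :=
  (sSup S).topologicalClosure

/-- A subspace lattice on `H`: a family of closed subspaces containing `{0}` and `H`,
closed under arbitrary intersections and arbitrary closed linear spans. -/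
structure IsSubspaceLattice {H : Type*} [NormedAddCommGroup H] [InnerProductSpace ℂ H]
    (L : Set (Submodule ℂ H)) : Prop where
  isClosed : ∀ E ∈ L, IsClosed (E : Set H)
  bot_mem : ⊥ ∈ L
  top_mem : ⊤ ∈ L
  sInf_mem : ∀ S : Set (Submodule ℂ H), S ⊆ L → sInf S ∈ L
  join_mem : ∀ S : Set (Submodule ℂ H), S ⊆ L → closedJoin S ∈ L

/-- `M₋`: the join of all members of `L` that do not contain `M`. -/
def minus {H : Type*} [NormedAddCommGroup H] [InnerProductSpace ℂ H]
    (L : Set (Submodule ℂ H)) (M : Submodule ℂ H) : Submodule ℂ H :=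
  closedJoin {E | E ∈ L ∧ ¬ M ≤ E}

open Classical in
/-- The orthogonal projection of `H` onto a closed subspace `E`, as an operator on `H`
(junk value `0` if `E` is not closed). -/
def projOf {H : Type*} [NormedAddCommGroup H] [InnerProductSpace ℂ H] [CompleteSpace H]
    (E : Submodule ℂ H) : H →L[ℂ] H :=
  if h : IsClosed (E : Set H) then
    haveI : CompleteSpace E := h.completeSpace_coe
    E.subtypeL.comp (Submodule.orthogonalProjectionOnto E)
  else 0

/-- A commutative subspace lattice: the orthogonal projections onto members commute. -/
structure IsCSL {H : Type*} [NormedAddCommGroup H] [InnerProductSpace ℂ H] [CompleteSpace H]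
    (L : Set (Submodule ℂ H)) extends IsSubspaceLattice L : Prop where
  commutes : ∀ E ∈ L, ∀ F ∈ L, projOf E * projOf F = projOf F * projOf E

/-- Complete distributivity of the lattice `L` (meets are intersections, joins are
closed linear spans). -/
def IsCompletelyDistributive {H : Type*} [NormedAddCommGroup H] [InnerProductSpace ℂ H]
    (L : Set (Submodule ℂ H)) : Prop :=
  ∀ (I : Type) (J : I → Type) (E : (i : I) → J i → Submodule ℂ H),
    (∀ i j, E i j ∈ L) →
     ((⨅ i, closedJoin (Set.range (E i)))
        = closedJoin (Set.range fun φ : (∀ i, J i) => ⨅ i, E i (φ i)))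
    ∧ (closedJoin (Set.range fun i => ⨅ j, E i j)
        = ⨅ φ : (∀ i, J i), closedJoin (Set.range fun i => E i (φ i)))

/-- `Alg L`: all bounded operators leaving every member of `L` invariant. -/
def algL {H : Type*} [NormedAddCommGroup H] [InnerProductSpace ℂ H]
    (L : Set (Submodule ℂ H)) : Set (H →L[ℂ] H) :=
  {T | ∀ E ∈ L, ∀ x ∈ E, T x ∈ E}

/-- The rank one operator `x ⊗ f* : h ↦ ⟨h, f⟩ x`. -/
def rankOne {H : Type*} [NormedAddCommGroup H] [InnerProductSpace ℂ H]
    (x f : H) : H →L[ℂ] H :=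
  (innerSL ℂ f).smulRight x

/-- The rank of a bounded operator: the dimension of its range. -/
def opRank {H : Type*} [NormedAddCommGroup H] [InnerProductSpace ℂ H]
    (T : H →L[ℂ] H) : Cardinal :=
  Module.rank ℂ (LinearMap.range (T : H →ₗ[ℂ] H))

/-- `Φ` is a linear map of `Alg L` into itself. -/
structure IsLinearOnAlg {H : Type*} [NormedAddCommGroup H] [InnerProductSpace ℂ H]
    (L : Set (Submodule ℂ H)) (Φ : (H →L[ℂ] H) → (H →L[ℂ] H)) : Prop where
  maps : ∀ A ∈ algL L, Φ A ∈ algL L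
  map_add : ∀ A ∈ algL L, ∀ B ∈ algL L, Φ (A + B) = Φ A + Φ B
  map_smul : ∀ (c : ℂ), ∀ A ∈ algL L, Φ (c • A) = c • Φ A

/-- `Φ` preserves the rank of every finite rank operator in `Alg L`. -/
def RankPreserving {H : Type*} [NormedAddCommGroup H] [InnerProductSpace ℂ H]
    (L : Set (Submodule ℂ H)) (Φ : (H →L[ℂ] H) → (H →L[ℂ] H)) : Prop :=
  ∀ A ∈ algL L, opRank A < Cardinal.aleph0 → opRank (Φ A) = opRank A

/-- `a ∼ b`: (nonzero) vectors `a` and `b` are linearly dependent. -/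
def Dep {H : Type*} [NormedAddCommGroup H] [InnerProductSpace ℂ H] (a b : H) : Prop :=
  ∃ c : ℂ, c ≠ 0 ∧ b = c • a

/-- `N` is consistent with respect to `Φ`. -/
def Consistent {H : Type*} [NormedAddCommGroup H] [InnerProductSpace ℂ H]
    (L : Set (Submodule ℂ H)) (Φ : (H →L[ℂ] H) → (H →L[ℂ] H))
    (N : Submodule ℂ H) : Prop :=
  N ≠ ⊥ ∧ minus L N ≠ ⊤ ∧
    ∃ (U : N →ₗ[ℂ] H) (V : ((minus L N)ᗮ : Submodule ℂ H) →ₗ[ℂ] H),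
      ∀ (x : N) (f : ((minus L N)ᗮ : Submodule ℂ H)),
        Φ (rankOne (x : H) (f : H)) = rankOne (U x) (V f)

/-- `N` is twisted with respect to `Φ`. -/
def Twisted {H : Type*} [NormedAddCommGroup H] [InnerProductSpace ℂ H]
    (L : Set (Submodule ℂ H)) (Φ : (H →L[ℂ] H) → (H →L[ℂ] H))
    (N : Submodule ℂ H) : Prop :=
  N ≠ ⊥ ∧ minus L N ≠ ⊤ ∧
    ∃ (U : ((minus L N)ᗮ : Submodule ℂ H) →ₗ⋆[ℂ] H) (V : N →ₗ⋆[ℂ] H),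
      ∀ (x : N) (f : ((minus L N)ᗮ : Submodule ℂ H)),
        Φ (rankOne (x : H) (f : H)) = rankOne (U f) (V x)

/-- `N` is isolated: `dim N = 1` and `N^⊥ ∈ L`. -/
def Isolated {H : Type*} [NormedAddCommGroup H] [InnerProductSpace ℂ H]
    (L : Set (Submodule ℂ H)) (N : Submodule ℂ H) : Prop :=
  Module.rank ℂ N = 1 ∧ Nᗮ ∈ L

/-- The family `F` of all `N ∈ L` with `N ≠ {0}` and `N₋ ≠ H`. -/
def famF {H : Type*} [NormedAddCommGroup H] [InnerProductSpace ℂ H]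
    (L : Set (Submodule ℂ H)) : Set (Submodule ℂ H) :=
  {N | N ∈ L ∧ N ≠ ⊥ ∧ minus L N ≠ ⊤}

/-- Subspaces are comparable if one contains the other. -/
def Comparable' {H : Type*} [NormedAddCommGroup H] [InnerProductSpace ℂ H]
    (M N : Submodule ℂ H) : Prop :=
  M ≤ N ∨ N ≤ M

/-- There is a chain in `F` from `M` to `N`. -/
def ChainConn {H : Type*} [NormedAddCommGroup H] [InnerProductSpace ℂ H]
    (L : Set (Submodule ℂ H)) (M N : Submodule ℂ H) : Prop :=
  ∃ (n : ℕ) (c : Fin (n + 1) → Submodule ℂ H),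
    (∀ k, c k ∈ famF L) ∧ c 0 = M ∧ c (Fin.last n) = N ∧
      ∀ k : Fin n, Comparable' (c k.castSucc) (c k.succ)

/-- `𝔊_N`: all members of `F` that can be connected to `N` by a chain. -/
def GSet {H : Type*} [NormedAddCommGroup H] [InnerProductSpace ℂ H]
    (L : Set (Submodule ℂ H)) (N : Submodule ℂ H) : Set (Submodule ℂ H) :=
  {M | M ∈ famF L ∧ ChainConn L N M}

end

/-!
The operator `x ⊗ f*` leaves a subspace `F` invariant exactly when `x ∈ F` or `f ⊥ F`, and
`f ⊥ E₋` says that every `F ∈ L` satisfies `E ≤ F` or `f ⊥ F`. The two conditions on `F`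
coincide when `E` is the smallest member of `L` containing `x`, for which `E ≤ F ↔ x ∈ F`.
-/

section

variable {H : Type*} [NormedAddCommGroup H] [InnerProductSpace ℂ H]
  {L : Set (Submodule ℂ H)} {x f : H}

theorem rankOne_apply (x f h : H) : rankOne x f h = ⟪f, h⟫_ℂ • x :=
  rfl

theorem forall_rankOne_mem_iff {E : Submodule ℂ H} :
    (∀ y ∈ E, rankOne x f y ∈ E) ↔ x ∈ E ∨ f ∈ Eᗮ := by
  simp only [rankOne_apply, Submodule.mem_orthogonal']
  refine ⟨fun hE => or_iff_not_imp_left.2 fun hx y hy => ?_, ?_⟩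
  · by_contra hfy
    exact hx ((E.smul_mem_iff hfy).1 (hE y hy))
  · rintro (hx | hf) y hy
    · exact E.smul_mem _ hx
    · simp only [hf y hy, zero_smul, E.zero_mem]

theorem rankOne_mem_algL_iff : rankOne x f ∈ algL L ↔ ∀ E ∈ L, x ∈ E ∨ f ∈ Eᗮ :=
  forall₂_congr fun _ _ => forall_rankOne_mem_iff

theorem mem_orthogonal_closedJoin_iff {S : Set (Submodule ℂ H)} :
    f ∈ (closedJoin S)ᗮ ↔ ∀ E ∈ S, f ∈ Eᗮ := by
  simp only [closedJoin, Submodule.orthogonal_closure, ← Submodule.sInf_orthogonal,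
    Submodule.mem_iInf]

theorem mem_orthogonal_minus_iff {M : Submodule ℂ H} :
    f ∈ (minus L M)ᗮ ↔ ∀ E ∈ L, M ≤ E ∨ f ∈ Eᗮ := by
  simp only [minus, mem_orthogonal_closedJoin_iff, Set.mem_ofPred_eq, and_imp,
    or_iff_not_imp_left]

/-- The meet of all members of `L` containing `x`. When `L` is closed under intersections, this is
the smallest member of `L` containing `x`. -/
def latticeHull (L : Set (Submodule ℂ H)) (x : H) : Submodule ℂ H :=
  sInf {E | E ∈ L ∧ x ∈ E}

theorem mem_latticeHull : x ∈ latticeHull L x :=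
  Submodule.mem_sInf.2 fun _ hE => hE.2

theorem latticeHull_le_iff {E : Submodule ℂ H} (hE : E ∈ L) : latticeHull L x ≤ E ↔ x ∈ E :=
  ⟨fun h => h mem_latticeHull, fun hx => sInf_le ⟨hE, hx⟩⟩

theorem stmt_17_general (hL : ∀ S ⊆ L, sInf S ∈ L) :
    rankOne x f ∈ algL L ↔ ∃ E ∈ L, x ∈ E ∧ f ∈ (minus L E)ᗮ := by
  simp only [rankOne_mem_algL_iff, mem_orthogonal_minus_iff]
  constructor
  · intro h
    refine ⟨latticeHull L x, hL _ fun _ hE => hE.1, mem_latticeHull, fun F hF => ?_⟩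
    exact (h F hF).imp_left (latticeHull_le_iff hF).2
  · rintro ⟨E, -, hxE, hE⟩ F hF
    exact (hE F hF).imp_left fun hEF => hEF hxE

end

/-- (Longstaff) `x ⊗ f* ∈ Alg L` iff there is `E ∈ L` with `x ∈ E` and `f ∈ E₋ᗮ`. -/
theorem stmt_17 {H : Type*} [NormedAddCommGroup H] [InnerProductSpace ℂ H]
    [CompleteSpace H] [TopologicalSpace.SeparableSpace H]
    (L : Set (Submodule ℂ H)) (hL : IsSubspaceLattice L)
    (x f : H) (hx : x ≠ 0) (hf : f ≠ 0) :
    rankOne x f ∈ algL L ↔ ∃ E ∈ L, x ∈ E ∧ f ∈ (minus L E)ᗮ :=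
  stmt_17_general hL.sInf_mem
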